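/- Fix an integer r ≥ 1 and let K_r = ℚ(x_0, …, x_{r-1}, y_0, …, y_{r-1}) be the field of rational functions in 2r indeterminates over ℚ; adopt the convention x_j = 1 for j < 0 or j ≥ r. For 0 ≤ i ≤ r−1 and 0 ≤ n ≤ r−i define X_{i,n} = Σ_{k=0}^{n} (∏_{j=i}^{i+k-1} y_j) · x_{i-1} x_{i+n} / (x_{i+k-1} x_{i+k}) ∈ K_r (empty products equal 1); in particular X_{i,0} = 1 and X_{i,1} = (x_{i+1} + y_i x_{i-1})/x_i. Then for every 0 ≤ i ≤ r−1 and 1 ≤ n ≤ r−i, X_{i,n} equals the determinant of the n×n tridiagonal matrix whose diagonal entries, from top-left to bottom-right, are X_{i+n-1,1}, X_{i+n-2,1}, …, X_{i,1}, whose superdiagonal entries are all 1, and whose subdiagonal entries, from top to bottom, are y_{i+n-1}, y_{i+n-2}, …, y_{i+1}. -/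

import Mathlib

/-- The `n × n` tridiagonal matrix whose diagonal entries, from top-left to bottom-right,
are `x (i+n-1), x (i+n-2), …, x i`, whose superdiagonal entries are all `1`, and whose
subdiagonal entries, from top to bottom, are `q (i+n-1), …, q (i+1)`. -/
def triMat {R : Type*} [CommRing R] (q x : ℤ → R) (i : ℤ) (n : ℕ) :
    Matrix (Fin n) (Fin n) R :=
  Matrix.of fun j k =>
    if (j : ℕ) = (k : ℕ) then x (i + (n : ℤ) - 1 - (j : ℕ))
    else if (j : ℕ) + 1 = (k : ℕ) then 1
    else if (k : ℕ) + 1 = (j : ℕ) then q (i + (n : ℤ) - 1 - (k : ℕ))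
    else 0

/-- The tridiagonal determinant `D_{i,n}(q,x)`; by convention `D_{i,0}(q,x) = 1`. -/
def triDet {R : Type*} [CommRing R] (q x : ℤ → R) (i : ℤ) (n : ℕ) : R :=
  (triMat q x i n).det

/-- The field `K_r = ℚ(x_0, …, x_{r-1}, y_0, …, y_{r-1})` of rational functions in `2r`
indeterminates over `ℚ`. -/
abbrev Kr (r : ℕ) := FractionRing (MvPolynomial (Fin r ⊕ Fin r) ℚ)

/-- The element `x_j` of `K_r`, with the convention `x_j = 1` for `j < 0` or `j ≥ r`. -/
noncomputable def xcl (r : ℕ) (j : ℤ) : Kr r :=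
  if h : 0 ≤ j ∧ j < (r : ℤ) then
    algebraMap (MvPolynomial (Fin r ⊕ Fin r) ℚ) (Kr r)
      (MvPolynomial.X (Sum.inl ⟨j.toNat, by omega⟩))
  else 1

/-- The element `y_j` of `K_r` (by convention `1` out of range, which is never used). -/
noncomputable def ycl (r : ℕ) (j : ℤ) : Kr r :=
  if h : 0 ≤ j ∧ j < (r : ℤ) then
    algebraMap (MvPolynomial (Fin r ⊕ Fin r) ℚ) (Kr r)
      (MvPolynomial.X (Sum.inr ⟨j.toNat, by omega⟩))
  else 1

/-- The Laurent expansion `X_{i,n} = Σ_{k=0}^{n} (∏_{j=i}^{i+k-1} y_j) ·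
x_{i-1} x_{i+n} / (x_{i+k-1} x_{i+k})` of the cluster character with principal
coefficients of the indecomposable module `S_i^{(n)}`. -/
noncomputable def Xcl (r : ℕ) (i : ℤ) (n : ℕ) : Kr r :=
  ∑ k ∈ Finset.range (n + 1),
    (∏ j ∈ Finset.range k, ycl r (i + (j : ℕ))) *
      xcl r (i - 1) * xcl r (i + (n : ℕ)) /
        (xcl r (i + (k : ℕ) - 1) * xcl r (i + (k : ℕ)))

theorem triDet_rec {R : Type*} [CommRing R] (q x : ℤ → R) (i : ℤ) (n : ℕ) :
    triDet q x i (n + 2) =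
      x (i + n + 1) * triDet q x i (n + 1) - q (i + n + 1) * triDet q x i n := by
  have h1 : (triMat q x i (n + 2)).submatrix Fin.succ Fin.succ = triMat q x i (n + 1) := by
    ext j k
    have e1 : i + ((n + 2 : ℕ) : ℤ) - 1 - ((j : ℕ) + 1 : ℕ)
        = i + ((n + 1 : ℕ) : ℤ) - 1 - (j : ℕ) := by push_cast; ring
    have e2 : i + ((n + 2 : ℕ) : ℤ) - 1 - ((k : ℕ) + 1 : ℕ)
        = i + ((n + 1 : ℕ) : ℤ) - 1 - (k : ℕ) := by push_cast; ring
    simp only [triMat, Matrix.submatrix_apply, Matrix.of_apply, Fin.val_succ, e1, e2,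
      Nat.add_right_cancel_iff]
  have h2 : (triMat q x i (n + 2)).submatrix (fun j : Fin n => j.succ.succ)
      (fun j : Fin n => j.succ.succ) = triMat q x i n := by
    ext j k
    have e1 : i + ((n + 2 : ℕ) : ℤ) - 1 - ((j : ℕ) + 1 + 1 : ℕ)
        = i + (n : ℤ) - 1 - (j : ℕ) := by push_cast; ring
    have e2 : i + ((n + 2 : ℕ) : ℤ) - 1 - ((k : ℕ) + 1 + 1 : ℕ)
        = i + (n : ℤ) - 1 - (k : ℕ) := by push_cast; ring
    simp only [triMat, Matrix.submatrix_apply, Matrix.of_apply, Fin.val_succ, e1, e2,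
      Nat.add_right_cancel_iff]
  have h00 : triMat q x i (n + 2) 0 0 = x (i + n + 1) := by
    simp only [triMat, Matrix.of_apply, if_true, Fin.val_zero]
    congr 1; push_cast; ring
  have h01 : triMat q x i (n + 2) 0 1 = 1 := by
    simp [triMat]
  have h10 : triMat q x i (n + 2) 1 0 = q (i + n + 1) := by
    simp [triMat]
    congr 1; ring
  have h0 : ∀ k : Fin n, triMat q x i (n + 2) 0 k.succ.succ = 0 := by
    intro k; simp [triMat]
  have h0' : ∀ k : Fin n, triMat q x i (n + 2) k.succ.succ 0 = 0 := by
    intro k; simp [triMat]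
  unfold triDet
  rw [← h1, ← h2]
  generalize triMat q x i (n + 2) = M at *
  rw [Matrix.det_succ_row_zero, Fin.sum_univ_succ, Fin.sum_univ_succ]
  have hz : ∑ k : Fin n, (-1 : R) ^ (k.succ.succ : ℕ) * M 0 k.succ.succ *
      (M.submatrix Fin.succ k.succ.succ.succAbove).det = 0 :=
    Finset.sum_eq_zero fun k _ => by rw [h0]; ring
  have hminor : (M.submatrix Fin.succ (Fin.succAbove (Fin.succ (0 : Fin (n + 1))))).det =
      q (i + n + 1) * (M.submatrix (fun j : Fin n => j.succ.succ)
      (fun j : Fin n => j.succ.succ)).det := by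
    rw [Matrix.det_succ_column_zero, Fin.sum_univ_succ, Finset.sum_eq_zero]
    · have ha : (M.submatrix Fin.succ (Fin.succAbove (Fin.succ (0 : Fin (n + 1))))) 0 0
          = q (i + n + 1) := by
        rw [← h10]; simp
      rw [ha]
      simp [Matrix.submatrix_submatrix]
      congr 2
    · intro k _
      have hb : (M.submatrix Fin.succ (Fin.succAbove (Fin.succ (0 : Fin (n + 1))))) k.succ 0
          = 0 := by
        rw [← h0' k]; simp
      rw [hb]; ring
  rw [hz, hminor, h00]
  have h01' : M 0 (Fin.succ 0) = 1 := h01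
  rw [h01']
  simp
  ring

theorem xcl_ne_zero (r : ℕ) (j : ℤ) : xcl r j ≠ 0 := by
  unfold xcl
  split_ifs with h
  · rw [Ne, FaithfulSMul.algebraMap_eq_zero_iff]
    exact MvPolynomial.X_ne_zero _
  · exact one_ne_zero

theorem Xcl_rec (r : ℕ) (i : ℤ) (n : ℕ) :
    Xcl r i (n + 2) =
      Xcl r (i + n + 1) 1 * Xcl r i (n + 1) - ycl r (i + n + 1) * Xcl r i n := by
  have key : ∀ m : ℕ, Xcl r i m = xcl r (i - 1) * xcl r (i + m) *
      ∑ k ∈ Finset.range (m + 1), (∏ j ∈ Finset.range k, ycl r (i + (j : ℕ))) /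
        (xcl r (i + (k : ℕ) - 1) * xcl r (i + (k : ℕ))) := by
    intro m
    unfold Xcl
    rw [Finset.mul_sum]
    refine Finset.sum_congr rfl fun k _ => ?_
    ring
  have h1 : Xcl r (i + n + 1) 1 =
      (xcl r (i + n + 2) + ycl r (i + n + 1) * xcl r (i + n)) / xcl r (i + n + 1) := by
    have a := xcl_ne_zero r (i + n)
    have b := xcl_ne_zero r (i + n + 1)
    have c := xcl_ne_zero r (i + n + 2)
    have e1 : i + (n : ℤ) + 1 - 1 = i + n := by ring
    have e2 : i + (n : ℤ) + 1 + 1 = i + n + 2 := by ring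
    have e5 : i + (n : ℤ) + 2 - 1 = i + n + 1 := by ring
    simp [Xcl, Finset.sum_range_succ, e1, e2, e5]
    field_simp
  rw [key, key, key, h1, Finset.sum_range_succ _ (n + 2), Finset.sum_range_succ _ (n + 1),
    Finset.prod_range_succ _ (n + 1)]
  have a := xcl_ne_zero r (i + n)
  have b := xcl_ne_zero r (i + n + 1)
  have c := xcl_ne_zero r (i + n + 2)
  have e1 : i + ((n + 1 : ℕ) : ℤ) = i + n + 1 := by push_cast; ring
  have e2 : i + ((n + 2 : ℕ) : ℤ) = i + n + 2 := by push_cast; ring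
  have e3 : i + (n : ℤ) + 1 - 1 = i + n := by ring
  have e4 : i + (n : ℤ) + 2 - 1 = i + n + 1 := by ring
  rw [e1, e2, e3, e4]
  generalize (∑ k ∈ Finset.range (n + 1), (∏ j ∈ Finset.range k, ycl r (i + (j : ℕ))) /
        (xcl r (i + (k : ℕ) - 1) * xcl r (i + (k : ℕ)))) = S
  generalize (∏ j ∈ Finset.range (n + 1), ycl r (i + (j : ℕ))) = P
  field_simp
  ring

theorem Xcl_eq_triDet (r : ℕ) (i : ℤ) (n : ℕ) :
    Xcl r i n = triDet (ycl r) (fun j => Xcl r j 1) i n := by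
  induction n using Nat.twoStepInduction with
  | zero =>
    have a := xcl_ne_zero r i
    have b := xcl_ne_zero r (i - 1)
    simp [Xcl, triDet, a, b]
  | one => simp [triDet, triMat]
  | more n h1 h2 => rw [triDet_rec, Xcl_rec, h1, h2]

/-- Theorem 3: the cluster character `X_{i,n} = X^{A,y}_{S_i^{(n)}}` equals the `n × n`
tridiagonal determinant with diagonal `X_{i+n-1,1}, …, X_{i,1}`, superdiagonal `1` and
subdiagonal `y_{i+n-1}, …, y_{i+1}`. -/
theorem cluster_character_typeA_det (r : ℕ) (hr : 1 ≤ r) (i : ℤ) (n : ℕ)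
    (hi0 : 0 ≤ i) (hir : i ≤ (r : ℤ) - 1) (hn : 1 ≤ n) (hnr : (n : ℤ) ≤ (r : ℤ) - i) :
    Xcl r i n = triDet (ycl r) (fun j => Xcl r j 1) i n := by
  exact Xcl_eq_triDet r i n
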